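/- arXiv:2402.15660 — 7 statements merged into one kernel-verified Lean document; each statement's English description precedes it below -/
import Mathlib

section
/- Let f be a nonzero holomorphic polynomial in n complex variables that is weighted homogeneous of positive degree d with respect to a strictly positive integer weight vector P = (p₁,…,pₙ), i.e., every monomial z^ν with nonzero coefficient in f satisfies Σ_{j=1}^n p_j ν_j = d. If f has at least two monomials with nonzero coefficient, then the restriction of f to the torus, f : (ℂ*)^n → ℂ, is surjective. -/
/-!
For `w ≠ 0`, a nonzero polynomial cannot vanish on the whole torus, so `f z ≠ 0` for some `z` in
the torus; weighted homogeneity gives `f (t ^ P • z) = t ^ d * f z`, and `ℂ` contains a `d`-th root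
`t` of `w / f z`. For `w = 0`, if `f` had no zero in the torus then the product of the coordinates
would vanish on the zero locus of `f`, so by the Nullstellensatz `f` would divide a power of
`∏ i, X i`. A divisor of a monomial is a monomial, contradicting the presence of two terms.
-/

open MvPolynomial in
/-- The zero locus of a polynomial with at least two terms is not contained in the union of the
coordinate hyperplanes: otherwise the Nullstellensatz makes it divide a monomial. -/
lemma exists_torus_zero {n : ℕ} {f : MvPolynomial (Fin n) ℂ} (htwo : 1 < f.support.card) :
    ∃ z : Fin n → ℂ, (∀ j, z j ≠ 0) ∧ eval z f = 0 := by
  classical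
  by_contra! h
  have hmem : (∏ i, X i : MvPolynomial (Fin n) ℂ) ∈
      vanishingIdeal ℂ (zeroLocus ℂ (Ideal.span {f})) := by
    rw [zeroLocus_span, mem_vanishingIdeal_iff]
    intro x hx
    have hfx : eval x f = 0 := by simpa [aeval_eq_eval] using hx
    obtain ⟨j, hj⟩ : ∃ j, x j = 0 := by
      by_contra! hne
      exact h x hne hfx
    simpa [Finset.prod_eq_zero_iff] using ⟨j, hj⟩
  rw [vanishingIdeal_zeroLocus_eq_radical] at hmem
  obtain ⟨k, hk⟩ := hmem
  rw [Ideal.mem_span_singleton, ← Finset.prod_pow, prod_X_pow (fun _ ↦ k),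
    dvd_monomial_iff_exists one_ne_zero] at hk
  obtain ⟨m, b, -, -, rfl⟩ := hk
  have := Finset.card_le_card (support_monomial_subset (s := m) (a := b))
  simp at this
  omega

open MvPolynomial in
lemma exists_torus_ne_zero {n : ℕ} {f : MvPolynomial (Fin n) ℂ} (hf : f ≠ 0) :
    ∃ z : Fin n → ℂ, (∀ j, z j ≠ 0) ∧ eval z f ≠ 0 := by
  by_contra! h
  refine hf (funext_set (fun _ ↦ {0}ᶜ) (fun _ ↦ (Set.finite_singleton 0).infinite_compl) ?_)
  intro x hx
  simpa using h x fun j ↦ by simpa using hx j (Set.mem_univ j)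

open MvPolynomial in
lemma eval_weighted_scale {n : ℕ} {f : MvPolynomial (Fin n) ℂ} {P : Fin n → ℕ} {d : ℕ}
    (hwh : ∀ ν ∈ f.support, ∑ j, P j * ν j = d) (t : ℂ) (z : Fin n → ℂ) :
    eval (fun j ↦ t ^ P j * z j) f = t ^ d * eval z f := by
  rw [eval_eq', eval_eq', Finset.mul_sum]
  refine Finset.sum_congr rfl fun ν hν ↦ ?_
  simp only [mul_pow, Finset.prod_mul_distrib, ← pow_mul, Finset.prod_pow_eq_pow_sum, hwh ν hν]
  ring

/-- A nonzero holomorphic weighted homogeneous polynomial of positive degree with respect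
to a strictly positive weight vector which has at least two monomials is surjective as a
map `(ℂ*)ⁿ → ℂ`. -/
theorem surjective_on_torus_of_two_monomials
    (n : ℕ) (f : MvPolynomial (Fin n) ℂ) (hf : f ≠ 0)
    (P : Fin n → ℕ) (hP : ∀ j, 0 < P j) (d : ℕ) (hd : 0 < d)
    (hwh : ∀ ν ∈ f.support, ∑ j, P j * ν j = d)
    (htwo : 1 < f.support.card) :
    ∀ w : ℂ, ∃ z : Fin n → ℂ, (∀ j, z j ≠ 0) ∧ MvPolynomial.eval z f = w := by
  intro w
  obtain rfl | hw := eq_or_ne w 0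
  · exact exists_torus_zero htwo
  obtain ⟨z, hz, hfz⟩ := exists_torus_ne_zero hf
  obtain ⟨t, ht⟩ := IsAlgClosed.exists_pow_nat_eq (w / MvPolynomial.eval z f) hd
  have ht0 : t ≠ 0 := by
    rintro rfl
    rw [zero_pow hd.ne'] at ht
    exact div_ne_zero hw hfz ht.symm
  refine ⟨fun j ↦ t ^ P j * z j, fun j ↦ mul_ne_zero (pow_ne_zero _ ht0) (hz j), ?_⟩
  rw [eval_weighted_scale hwh, ht, div_mul_cancel₀ _ hfz]
end

section
/- Let f : ℂ^n → ℂ be a mixed polynomial, f(z) = Σ_{(ν,μ)} c(ν,μ) · z^ν · conj(z)^μ with finitely supported coefficient family c. Assume there is a strictly positive integer weight vector P = (p₁,…,pₙ) and a positive integer d_r such that every (ν,μ) with c(ν,μ) ≠ 0 satisfies Σ_j p_j(ν_j + μ_j) = d_r, and an integer weight vector Q = (q₁,…,qₙ) and a nonzero integer d_p such that every (ν,μ) with c(ν,μ) ≠ 0 satisfies Σ_j q_j(ν_j − μ_j) = d_p. If f has no mixed critical point in f^{-1}(0) ∩ (ℂ*)^n (i.e., at every z ∈ (ℂ*)^n with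 f(z) = 0 the real Fréchet derivative of f at z is surjective onto ℂ), then f has no mixed critical points on (ℂ*)^n: at every z ∈ (ℂ*)^n the real Fréchet derivative of f at z is surjective onto ℂ. -/
open ComplexConjugate

/-!
Points of the torus with `f z = 0` are regular by assumption. At a point with `f z ≠ 0`, the two
weighted homogeneities give Euler identities: differentiating `f` along the orbits
`t ↦ (exp (t pⱼ) zⱼ)` and `t ↦ (exp (i t qⱼ) zⱼ)` shows that the derivative of `f` at `z` takes
the values `d_r f(z)` and `i d_p f(z)`. Since `d_r`, `d_p` and `f z` are nonzero, these span `ℂ`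
over `ℝ`. Both identities are instances of `euler_identity`, with the complex exponents
`a = P` and `a = i Q`.
-/

/-- A mixed polynomial is real-differentiable. -/
lemma mixedPolynomial_differentiable {n : ℕ} (c : ((Fin n → ℕ) × (Fin n → ℕ)) →₀ ℂ)
    (f : (Fin n → ℂ) → ℂ)
    (hf : ∀ z : Fin n → ℂ,
      f z = c.sum fun νμ a =>
        a * (∏ j, z j ^ νμ.1 j) * ∏ j, (conj (z j)) ^ νμ.2 j) :
    Differentiable ℝ f := by
  have hconj : Differentiable ℝ (fun w : ℂ => conj w) := Complex.conjCLE.differentiable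
  have hc : ∀ j : Fin n, Differentiable ℝ (fun z : Fin n → ℂ => conj (z j)) := fun j =>
    hconj.comp (differentiable_apply j)
  rw [funext hf]
  unfold Finsupp.sum
  refine Differentiable.fun_sum fun νμ _ => ?_
  refine Differentiable.mul (Differentiable.const_mul ?_ _) ?_
  · exact fun z => (HasFDerivAt.finsetProd fun j _ =>
      ((differentiable_apply j).fun_pow _ z).hasFDerivAt).differentiableAt
  · exact fun z => (HasFDerivAt.finsetProd fun j _ =>
      ((hc j).fun_pow _ z).hasFDerivAt).differentiableAt

/-- Euler identity for the one-parameter action `t ↦ (exp (t aⱼ) zⱼ)`, `t` real and `a` complex,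
whose infinitesimal generator at `z` is `(aⱼ zⱼ)`: if every monomial of `f` has the same weight
`k` under this action, the derivative of `f` along the generator is `k f(z)`. -/
lemma euler_identity {n : ℕ} (c : ((Fin n → ℕ) × (Fin n → ℕ)) →₀ ℂ)
    (f : (Fin n → ℂ) → ℂ)
    (hf : ∀ z : Fin n → ℂ,
      f z = c.sum fun νμ a =>
        a * (∏ j, z j ^ νμ.1 j) * ∏ j, (conj (z j)) ^ νμ.2 j)
    (a : Fin n → ℂ) (k : ℂ)
    (hk : ∀ ν μ : Fin n → ℕ, c (ν, μ) ≠ 0 → ∑ j, (ν j * a j + μ j * conj (a j)) = k)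
    (z : Fin n → ℂ) :
    fderiv ℝ f z (fun j => a j * z j) = k * f z := by
  have hline : ∀ b : ℂ, HasDerivAt (fun t : ℝ => (t : ℂ) * b) b 0 := fun b => by
    simpa using (Complex.ofRealCLM.hasDerivAt (x := (0 : ℝ))).mul_const b
  have hexp : ∀ b : ℂ, HasDerivAt (fun t : ℝ => Complex.exp (t * b)) b 0 := fun b => by
    simpa using (hline b).cexp
  have hγ : HasDerivAt (fun (t : ℝ) (j : Fin n) => Complex.exp (t * a j) * z j)
      (fun j => a j * z j) 0 :=
    hasDerivAt_pi.2 fun j => (hexp (a j)).mul_const (z j)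
  have hfγ : ∀ t : ℝ, f (fun j => Complex.exp (t * a j) * z j) = Complex.exp (t * k) * f z := by
    intro t
    rw [hf, hf, Finsupp.mul_sum]
    refine Finset.sum_congr rfl fun νμ hνμ => ?_
    have h := hk νμ.1 νμ.2 (Finsupp.mem_support_iff.1 hνμ)
    simp only [map_mul, mul_pow, Finset.prod_mul_distrib, ← Complex.exp_conj, ← Complex.exp_nat_mul,
      ← Complex.exp_sum, Complex.conj_ofReal]
    rw [← h, Finset.mul_sum]
    have h2 : ∑ j, (t : ℂ) * (νμ.1 j * a j + νμ.2 j * conj (a j)) =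
        ∑ j, (νμ.1 j : ℂ) * (t * a j) + ∑ j, (νμ.2 j : ℂ) * (t * conj (a j)) := by
      rw [← Finset.sum_add_distrib]
      exact Finset.sum_congr rfl fun j _ => by ring
    rw [h2, Complex.exp_add]
    ring
  have hz : (fun j => Complex.exp ((0 : ℝ) * a j) * z j) = z := by simp
  have h1 := (mixedPolynomial_differentiable c f hf
    (fun j => Complex.exp ((0 : ℝ) * a j) * z j)).hasFDerivAt.comp_hasDerivAt (0 : ℝ) hγ
  rw [hz] at h1
  have h2 : HasDerivAt (fun t : ℝ => Complex.exp (t * k) * f z) (k * f z) 0 :=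
    (hexp k).mul_const (f z)
  exact h1.unique (h2.congr_of_eventuallyEq (Filter.Eventually.of_forall hfγ))

/-- A mixed weighted homogeneous polynomial (radially weighted homogeneous with respect
to a strictly positive weight vector `P` of positive radial degree, and polar weighted
homogeneous with respect to `Q` of nonzero polar degree) which has no mixed critical
points in `f⁻¹(0) ∩ (ℂ*)ⁿ` has no mixed critical points on `(ℂ*)ⁿ` at all. -/
theorem no_mixed_critical_points_on_torus
    (n : ℕ)
    (c : ((Fin n → ℕ) × (Fin n → ℕ)) →₀ ℂ)
    (f : (Fin n → ℂ) → ℂ)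
    (hf : ∀ z : Fin n → ℂ,
      f z = c.sum fun νμ a =>
        a * (∏ j, z j ^ νμ.1 j) * ∏ j, (conj (z j)) ^ νμ.2 j)
    (P : Fin n → ℕ) (hP : ∀ j, 0 < P j) (dr : ℕ) (hdr : 0 < dr)
    (hradial : ∀ ν μ : Fin n → ℕ, c (ν, μ) ≠ 0 → ∑ j, P j * (ν j + μ j) = dr)
    (Q : Fin n → ℤ) (dp : ℤ) (hdp : dp ≠ 0)
    (hpolar : ∀ ν μ : Fin n → ℕ, c (ν, μ) ≠ 0 → ∑ j, Q j * ((ν j : ℤ) - (μ j : ℤ)) = dp)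
    (hreg : ∀ z : Fin n → ℂ, (∀ j, z j ≠ 0) → f z = 0 →
      Function.Surjective (fderiv ℝ f z)) :
    ∀ z : Fin n → ℂ, (∀ j, z j ≠ 0) → Function.Surjective (fderiv ℝ f z) := by
  intro z hz
  by_cases h0 : f z = 0
  · exact hreg z hz h0
  have hr := euler_identity c f hf (fun j => (P j : ℂ)) dr (fun ν μ h => by
    rw [← hradial ν μ h]
    push_cast
    exact Finset.sum_congr rfl fun j _ => by simp; ring) z
  have hp := euler_identity c f hf (fun j => Complex.I * (Q j : ℂ)) (Complex.I * dp)
    (fun ν μ h => by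
      rw [← hpolar ν μ h]
      push_cast
      rw [Finset.mul_sum]
      exact Finset.sum_congr rfl fun j _ => by simp; ring) z
  have hdr' : (dr : ℂ) ≠ 0 := by exact_mod_cast hdr.ne'
  have hdp' : (dp : ℂ) ≠ 0 := by exact_mod_cast hdp
  intro w
  -- The coordinates of `w` in the real basis `d_r f(z)`, `i d_p f(z)` are read off from `w / f z`.
  refine ⟨((w / f z).re / dr) • (fun j => (P j : ℂ) * z j) +
    ((w / f z).im / dp) • (fun j => Complex.I * (Q j : ℂ) * z j), ?_⟩
  rw [map_add, map_smul, map_smul, hr, hp, Complex.real_smul, Complex.real_smul]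
  push_cast
  calc _ = (((w / f z).re : ℂ) + (w / f z).im * Complex.I) * f z := by field_simp
    _ = w := by rw [Complex.re_add_im, div_mul_cancel₀ _ h0]
end

section
/- The mixed polynomial f(z₁,z₂) = z₂²·conj(z₂) − 6·z₁²·z₂·conj(z₂) + 11·z₁²·conj(z₁)²·z₂ − 6·z₁⁴·conj(z₁)² has no mixed critical points on (ℂ*)²: for every point (a₁,a₂) ∈ ℂ² with a₁ ≠ 0 and a₂ ≠ 0, the Fréchet derivative at (a₁,a₂) of the map f : ℂ² → ℂ, regarded as an ℝ-linear map ℂ² → ℂ, is surjective. -/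
/-!
On `z₁ ≠ 0` put `z₂ = z₁² s`. Then `f = z₁⁴ z̄₁² g(s)` with `g(s) = s² s̄ - 6 s s̄ + 11 s - 6`, and
along the tangent vector `(z₁ p, z₁² (2 s p + q))` the derivative of `f` is
`z₁⁴ z̄₁² ((4 p + 2 p̄) g(s) + (2 s s̄ - 6 s̄ + 11) q + (s² - 6 s) q̄)`.

If `g(s) ≠ 0`, the choice `q = 0` suffices, because `p ↦ 4 p + 2 p̄` is onto.
If `g(s) = 0`, then `s (|s|² + 11) = 6 (|s|² + 1)` forces `s` to be real, so
`(s - 1)(s - 2)(s - 3) = 0`. At each of these three points the two coefficients of `q` and `q̄` are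
real with different absolute values, so `p = 0` suffices.
-/

open ComplexConjugate

/-- The real-linear map `q ↦ α q + β q̄` with real `α`, `β` is onto when `|α| ≠ |β|`. -/
lemma exists_mul_add_mul_conj (α β : ℝ) (h : α ^ 2 - β ^ 2 ≠ 0) (y : ℂ) :
    ∃ q : ℂ, α * q + β * conj q = y := by
  have h' : (α : ℂ) ^ 2 - (β : ℂ) ^ 2 ≠ 0 := by exact_mod_cast h
  refine ⟨(α * y - β * conj y) / ((α : ℂ) ^ 2 - (β : ℂ) ^ 2), ?_⟩
  simp only [map_div₀, map_sub, map_mul, map_pow, Complex.conj_ofReal, Complex.conj_conj]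
  field_simp
  ring

/-- The zeros of `s² s̄ - 6 s s̄ + 11 s - 6` are `1`, `2` and `3`. -/
lemma eq_of_profile_eq_zero (s : ℂ)
    (h : s ^ 2 * conj s - 6 * s * conj s + 11 * s - 6 = 0) : s = 1 ∨ s = 2 ∨ s = 3 := by
  have hn : ((Complex.normSq s : ℝ) : ℂ) = s * conj s := (Complex.mul_conj s).symm
  have h1 : s * ((Complex.normSq s + 11 : ℝ) : ℂ) = ((6 * (Complex.normSq s + 1) : ℝ) : ℂ) := by
    push_cast
    rw [hn]
    linear_combination h
  have him : s.im = 0 := by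
    have h2 := congrArg Complex.im h1
    rw [Complex.im_mul_ofReal, Complex.ofReal_im] at h2
    have := Complex.normSq_nonneg s
    rcases mul_eq_zero.1 h2 with h3 | h3
    · exact h3
    · linarith
  have hc : conj s = s := Complex.conj_eq_iff_im.2 him
  rw [hc] at h
  have h4 : (s - 1) * ((s - 2) * (s - 3)) = 0 := by linear_combination h
  simpa only [mul_eq_zero, sub_eq_zero] using h4

/-- The derivative in terms of the four Wirtinger derivatives of `f`. -/
lemma fderiv_apply_of_eq (f : ℂ × ℂ → ℂ)
    (hf : ∀ z₁ z₂ : ℂ, f (z₁, z₂) =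
      z₂ ^ 2 * conj z₂ - 6 * z₁ ^ 2 * z₂ * conj z₂
        + 11 * z₁ ^ 2 * (conj z₁) ^ 2 * z₂ - 6 * z₁ ^ 4 * (conj z₁) ^ 2) (z u v w : ℂ) :
    fderiv ℝ f (z, u) (v, w) =
      (-12 * z * u * conj u + 22 * z * conj z ^ 2 * u - 24 * z ^ 3 * conj z ^ 2) * v
      + (22 * z ^ 2 * conj z * u - 12 * z ^ 4 * conj z) * conj v
      + (2 * u * conj u - 6 * z ^ 2 * conj u + 11 * z ^ 2 * conj z ^ 2) * w
      + (u ^ 2 - 6 * z ^ 2 * u) * conj w := by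
  have hf' : f = fun x : ℂ × ℂ => x.2 ^ 2 * conj x.2 - 6 * x.1 ^ 2 * x.2 * conj x.2
        + 11 * x.1 ^ 2 * (conj x.1) ^ 2 * x.2 - 6 * x.1 ^ 4 * (conj x.1) ^ 2 := by
    funext x
    exact hf x.1 x.2
  have h1 : HasFDerivAt (fun x : ℂ × ℂ => x.1) (ContinuousLinearMap.fst ℝ ℂ ℂ) (z, u) :=
    hasFDerivAt_fst
  have h2 : HasFDerivAt (fun x : ℂ × ℂ => x.2) (ContinuousLinearMap.snd ℝ ℂ ℂ) (z, u) :=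
    hasFDerivAt_snd
  have c1 : HasFDerivAt (fun x : ℂ × ℂ => conj x.1)
      ((Complex.conjCLE : ℂ →L[ℝ] ℂ).comp (ContinuousLinearMap.fst ℝ ℂ ℂ)) (z, u) :=
    ((Complex.conjCLE : ℂ →L[ℝ] ℂ).comp (ContinuousLinearMap.fst ℝ ℂ ℂ)).hasFDerivAt
  have c2 : HasFDerivAt (fun x : ℂ × ℂ => conj x.2)
      ((Complex.conjCLE : ℂ →L[ℝ] ℂ).comp (ContinuousLinearMap.snd ℝ ℂ ℂ)) (z, u) :=
    ((Complex.conjCLE : ℂ →L[ℝ] ℂ).comp (ContinuousLinearMap.snd ℝ ℂ ℂ)).hasFDerivAt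
  have H := ((((h2.pow 2).mul c2).sub ((((h1.pow 2).const_mul (6 : ℂ)).mul h2).mul c2)).add
    ((((h1.pow 2).const_mul (11 : ℂ)).mul (c1.pow 2)).mul h2)).sub
    (((h1.pow 4).const_mul (6 : ℂ)).mul (c1.pow 2))
  rw [hf']
  erw [H.fderiv]
  simp
  ring

/-- The derivative along `(z p, z² (2 s p + q))` at `(z, z² s)`: the chart `(z, s) ↦ (z, z² s)`
separates the homogeneous factor `z⁴ z̄²` from the profile `g(s)`. -/
lemma fderiv_apply_chart (f : ℂ × ℂ → ℂ)
    (hf : ∀ z₁ z₂ : ℂ, f (z₁, z₂) =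
      z₂ ^ 2 * conj z₂ - 6 * z₁ ^ 2 * z₂ * conj z₂
        + 11 * z₁ ^ 2 * (conj z₁) ^ 2 * z₂ - 6 * z₁ ^ 4 * (conj z₁) ^ 2) (z s p q : ℂ) :
    fderiv ℝ f (z, z ^ 2 * s) (z * p, z ^ 2 * (2 * s * p + q)) =
      z ^ 4 * conj z ^ 2 *
        ((4 * p + 2 * conj p) * (s ^ 2 * conj s - 6 * s * conj s + 11 * s - 6)
          + (2 * s * conj s - 6 * conj s + 11) * q + (s ^ 2 - 6 * s) * conj q) := by
  rw [fderiv_apply_of_eq f hf]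
  simp only [map_mul, map_add, map_pow, map_ofNat]
  ring

/-- The strongly mixed weighted homogeneous polynomial of type `J₁₀⁻`
`f(z₁,z₂) = z₂² z̄₂ − 6 z₁² z₂ z̄₂ + 11 z₁² z̄₁² z₂ − 6 z₁⁴ z̄₁²` (that is,
`f_{2,2,1,2,1,4}` with `k = 3`) has no mixed critical points on `(ℂ*)²`. -/
theorem J10_f221214_no_mixed_critical_points
    (f : ℂ × ℂ → ℂ)
    (hf : ∀ z₁ z₂ : ℂ, f (z₁, z₂) =
      z₂ ^ 2 * conj z₂ - 6 * z₁ ^ 2 * z₂ * conj z₂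
        + 11 * z₁ ^ 2 * (conj z₁) ^ 2 * z₂ - 6 * z₁ ^ 4 * (conj z₁) ^ 2) :
    ∀ a₁ a₂ : ℂ, a₁ ≠ 0 → a₂ ≠ 0 →
      Function.Surjective (fderiv ℝ f (a₁, a₂)) := by
  intro z u hz _ y
  obtain ⟨s, rfl⟩ : ∃ s, u = z ^ 2 * s := ⟨u / z ^ 2, by field_simp⟩
  have hN : z ^ 4 * conj z ^ 2 ≠ 0 := by simp [hz]
  suffices h : ∃ p q : ℂ,
      (4 * p + 2 * conj p) * (s ^ 2 * conj s - 6 * s * conj s + 11 * s - 6)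
        + (2 * s * conj s - 6 * conj s + 11) * q + (s ^ 2 - 6 * s) * conj q
        = y / (z ^ 4 * conj z ^ 2) by
    obtain ⟨p, q, h⟩ := h
    exact ⟨_, by rw [fderiv_apply_chart f hf z s p q, h, mul_div_cancel₀ _ hN]⟩
  generalize y / (z ^ 4 * conj z ^ 2) = Y
  by_cases hg : s ^ 2 * conj s - 6 * s * conj s + 11 * s - 6 = 0
  · rcases eq_of_profile_eq_zero s hg with rfl | rfl | rfl
    · obtain ⟨q, hq⟩ := exists_mul_add_mul_conj 7 (-5) (by norm_num) Y
      refine ⟨0, q, ?_⟩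
      rw [← hq]
      simp only [map_zero, map_one]
      push_cast
      ring
    · obtain ⟨q, hq⟩ := exists_mul_add_mul_conj 7 (-8) (by norm_num) Y
      refine ⟨0, q, ?_⟩
      rw [← hq]
      simp only [map_zero, map_ofNat]
      push_cast
      ring
    · obtain ⟨q, hq⟩ := exists_mul_add_mul_conj 11 (-9) (by norm_num) Y
      refine ⟨0, q, ?_⟩
      rw [← hq]
      simp only [map_zero, map_ofNat]
      push_cast
      ring
  · obtain ⟨p, hp⟩ := exists_mul_add_mul_conj 4 2 (by norm_num)
      (Y / (s ^ 2 * conj s - 6 * s * conj s + 11 * s - 6))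
    refine ⟨p, 0, ?_⟩
    push_cast at hp
    rw [hp, div_mul_cancel₀ _ hg]
    simp
end

section
/- The restriction to (ℂ*)² of the mixed polynomial f(z₁,z₂) = z₂²·conj(z₂) − 6·z₁²·z₂·conj(z₂) + 11·z₁²·conj(z₁)²·z₂ − 6·z₁⁴·conj(z₁)² is surjective onto ℂ: for every w ∈ ℂ there exist z₁, z₂ ∈ ℂ with z₁ ≠ 0, z₂ ≠ 0 and f(z₁,z₂) = w. -/
/-!
Write `u = z₁²`. On the line `z₂ = u` the coefficients `1 - 6 + 11 - 6` sum to zero, so `f`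
vanishes there; on the line `z₂ = -u` it equals `-24 z₁⁴ z̄₁²`. Since `z₁⁴ z̄₁² = z₁² |z₁|⁴`, the
latter attains every nonzero value: choose a square root to fix the argument, then rescale it
by a positive real number to fix the modulus.
-/

open ComplexConjugate

theorem exists_pow_four_mul_conj_sq_eq (v : ℂ) (hv : v ≠ 0) :
    ∃ z : ℂ, z ≠ 0 ∧ z ^ 4 * (conj z) ^ 2 = v := by
  obtain ⟨s, rfl⟩ := IsAlgClosed.exists_eq_mul_self v
  have hs : s ≠ 0 := fun h => hv (by simp [h])
  have hn : 0 < ‖s‖ := norm_pos_iff.mpr hs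
  -- `s / a` works as soon as `a ^ 6 = ‖s‖ ^ 4`.
  obtain ⟨a, ha, ha6⟩ : ∃ a : ℝ, 0 < a ∧ a ^ 6 = ‖s‖ ^ 4 :=
    ⟨(‖s‖ ^ 4) ^ ((6 : ℕ) : ℝ)⁻¹, by positivity,
      Real.rpow_inv_natCast_pow (by positivity) (by norm_num)⟩
  have haC : (a : ℂ) ≠ 0 := by exact_mod_cast ha.ne'
  have h6 : (a : ℂ) ^ 6 = (s * conj s) ^ 2 := by
    rw [Complex.mul_conj, Complex.normSq_eq_norm_sq]
    exact_mod_cast (by rw [ha6]; ring)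
  refine ⟨s / a, div_ne_zero hs haC, ?_⟩
  rw [map_div₀, Complex.conj_ofReal]
  field_simp
  rw [h6]
  ring

/-- The strongly mixed weighted homogeneous polynomial of type `J₁₀⁻`
`f(z₁,z₂) = z₂² z̄₂ − 6 z₁² z₂ z̄₂ + 11 z₁² z̄₁² z₂ − 6 z₁⁴ z̄₁²` (that is,
`f_{2,2,1,2,1,4}` with `k = 3`) is surjective as a map `(ℂ*)² → ℂ`. -/
theorem J10_f221214_surjective_on_torus
    (f : ℂ × ℂ → ℂ)
    (hf : ∀ z₁ z₂ : ℂ, f (z₁, z₂) =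
      z₂ ^ 2 * conj z₂ - 6 * z₁ ^ 2 * z₂ * conj z₂
        + 11 * z₁ ^ 2 * (conj z₁) ^ 2 * z₂ - 6 * z₁ ^ 4 * (conj z₁) ^ 2) :
    ∀ w : ℂ, ∃ z₁ z₂ : ℂ, z₁ ≠ 0 ∧ z₂ ≠ 0 ∧ f (z₁, z₂) = w := by
  intro w
  by_cases hw : w = 0
  · refine ⟨1, 1, one_ne_zero, one_ne_zero, ?_⟩
    rw [hf, hw, map_one]
    norm_num
  · obtain ⟨z, hz, h⟩ := exists_pow_four_mul_conj_sq_eq (-w / 24) (by simpa using hw)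
    refine ⟨z, -z ^ 2, hz, by simpa using hz, ?_⟩
    rw [hf, map_neg, map_pow]
    linear_combination (-24) * h
end

section
/- The mixed polynomial f_S : ℂ² → ℂ given by f_S(z₁,z₂) = z₂²·conj(z₂) has no mixed critical points on (ℂ*)²: for every point (a₁,a₂) ∈ ℂ² with a₁ ≠ 0 and a₂ ≠ 0, the Fréchet derivative of f_S at (a₁,a₂), regarded as an ℝ-linear map ℂ² → ℂ, is surjective. -/
/-!
The real derivative of `z₂² z̄₂` at `(a₁, a₂)` in the direction `(0, v)` is `2 |a|² v + a² v̄`,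
where `a = a₂`. An `ℝ`-linear map `v ↦ p v + q v̄` of `ℂ` has determinant `|p|² - |q|²`, here
`4 |a|⁴ - |a|⁴ = 3 |a|⁴ ≠ 0`, so the directions `(0, v)` already reach all of `ℂ`.
-/

open ComplexConjugate

/-- The 0-dimensional face function `f_S(z₁,z₂) = z₂² z̄₂` has no mixed critical points
on `(ℂ*)²`. -/
theorem face_function_fS_no_mixed_critical_points
    (fS : ℂ × ℂ → ℂ)
    (hfS : ∀ z₁ z₂ : ℂ, fS (z₁, z₂) = z₂ ^ 2 * conj z₂) :
    ∀ a₁ a₂ : ℂ, a₁ ≠ 0 → a₂ ≠ 0 →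
      Function.Surjective (fderiv ℝ fS (a₁, a₂)) := by
  intro a₁ a _ ha w
  obtain rfl : fS = fun z => z.2 ^ 2 * conj z.2 := funext fun z => hfS z.1 z.2
  have h2 : HasFDerivAt (fun z : ℂ × ℂ => z.2) (ContinuousLinearMap.snd ℝ ℂ ℂ) (a₁, a) :=
    hasFDerivAt_snd
  have hc : HasFDerivAt (fun z : ℂ × ℂ => conj z.2)
      ((Complex.conjCLE : ℂ →L[ℝ] ℂ).comp (ContinuousLinearMap.snd ℝ ℂ ℂ)) (a₁, a) :=
    (Complex.conjCLE : ℂ →L[ℝ] ℂ).hasFDerivAt.comp (a₁, a) h2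
  rw [((h2.pow 2).fun_mul hc).fderiv]
  have hb : conj a ≠ 0 := by simpa using ha
  -- The solution of `p v + q v̄ = w` is `v = (p̄ w - q w̄) / (|p|² - |q|²)`.
  refine ⟨(0, (2 * a * conj a * w - a ^ 2 * conj w) / (3 * (a * conj a) ^ 2)), ?_⟩
  have c2 : conj (2 : ℂ) = 2 := Complex.conj_ofNat 2
  have c3 : conj (3 : ℂ) = 3 := Complex.conj_ofNat 3
  simp [c2, c3]
  field_simp
  ring
end

section
/- For all u₁, u₂ ∈ ℂ, f(u₁·u₂, u₁) = u₁²·conj(u₁) · F̃(u₁,u₂), where F̃(u₁,u₂) = 1 − 6·u₁·u₂² + 11·u₁·conj(u₁)·u₂²·conj(u₂)² − 6·u₁²·conj(u₁)·u₂⁴·conj(u₂)². Moreover F̃(0,u₂) = 1 for every u₂ ∈ ℂ, and consequently the closure in ℂ² of the set {(u₁,u₂) ∈ ℂ² : u₁ ≠ 0 and f(u₁·u₂, u₁) = 0} contains no point with first coordinate 0. (This is the computation of the pullback of f under the toric chart π_{σ₁'}(u₁,u₂) = (u₁u₂, u₁), showing that the strict transform of V = f⁻¹(0) does not meet the exceptional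 divisor Ê(S) in this chart.) -/
open ComplexConjugate

/-! The factorization is a direct substitution. Where `u₁ ≠ 0`, the factor `u₁² ū₁` does not
vanish, so the set in question lies in the zero set of `F`. That zero set is closed because
`F` is continuous, hence contains the closure, and it misses the line `u₁ = 0` because
`F (0, u₂) = 1`. -/

/-- Pullback of `f = f_{2,2,1,2,1,4} (k = 3)` under the toric chart
`π_{σ₁'}(u₁,u₂) = (u₁u₂, u₁)`: one has `f(u₁u₂, u₁) = u₁² ū₁ F̃(u₁,u₂)` with
`F̃(u₁,u₂) = 1 − 6u₁u₂² + 11u₁ū₁u₂²ū₂² − 6u₁²ū₁u₂⁴ū₂²`; moreover `F̃(0,u₂) = 1` and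
the closure of the strict transform `{u₁ ≠ 0, f(u₁u₂,u₁) = 0}` contains no point with
first coordinate `0`. -/
theorem J10_f221214_toric_chart_sigma1
    (f F : ℂ × ℂ → ℂ)
    (hf : ∀ z₁ z₂ : ℂ, f (z₁, z₂) =
      z₂ ^ 2 * conj z₂ - 6 * z₁ ^ 2 * z₂ * conj z₂
        + 11 * z₁ ^ 2 * (conj z₁) ^ 2 * z₂ - 6 * z₁ ^ 4 * (conj z₁) ^ 2)
    (hF : ∀ u₁ u₂ : ℂ, F (u₁, u₂) =
      1 - 6 * u₁ * u₂ ^ 2 + 11 * u₁ * conj u₁ * u₂ ^ 2 * (conj u₂) ^ 2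
        - 6 * u₁ ^ 2 * conj u₁ * u₂ ^ 4 * (conj u₂) ^ 2) :
    (∀ u₁ u₂ : ℂ, f (u₁ * u₂, u₁) = u₁ ^ 2 * conj u₁ * F (u₁, u₂))
    ∧ (∀ u₂ : ℂ, F (0, u₂) = 1)
    ∧ (∀ p : ℂ × ℂ,
        p ∈ closure {q : ℂ × ℂ | q.1 ≠ 0 ∧ f (q.1 * q.2, q.1) = 0} → p.1 ≠ 0) := by
  have factor : ∀ u₁ u₂ : ℂ, f (u₁ * u₂, u₁) = u₁ ^ 2 * conj u₁ * F (u₁, u₂) := by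
    intro u₁ u₂
    rw [hf, hF]
    simp only [map_mul]
    ring
  have F_zero : ∀ u₂ : ℂ, F (0, u₂) = 1 := by
    intro u₂
    simp [hF]
  refine ⟨factor, F_zero, ?_⟩
  have hFc : Continuous F := by
    rw [show F = fun q : ℂ × ℂ =>
        1 - 6 * q.1 * q.2 ^ 2 + 11 * q.1 * conj q.1 * q.2 ^ 2 * (conj q.2) ^ 2
          - 6 * q.1 ^ 2 * conj q.1 * q.2 ^ 4 * (conj q.2) ^ 2 from
      funext fun q => hF q.1 q.2]
    fun_prop
  have hsub : {q : ℂ × ℂ | q.1 ≠ 0 ∧ f (q.1 * q.2, q.1) = 0} ⊆ {q | F q = 0} := by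
    rintro ⟨u₁, u₂⟩ ⟨hu, hz⟩
    have hu' : u₁ ≠ 0 := hu
    have hc : conj u₁ ≠ 0 := (map_ne_zero _).mpr hu'
    rw [factor] at hz
    exact (mul_eq_zero.mp hz).resolve_left (mul_ne_zero (pow_ne_zero 2 hu') hc)
  rintro ⟨u₁, u₂⟩ hp (rfl : u₁ = 0)
  have h0 : F (0, u₂) = 0 := closure_minimal hsub (isClosed_eq hFc continuous_const) hp
  exact one_ne_zero ((F_zero u₂).symm.trans h0)
end

section
/- The set { w ∈ ℂ : w²·conj(w) − 6·w·conj(w) + 11·w − 6 = 0 } equals {1, 2, 3}. Consequently, the strict transform of V = f⁻¹(0) in the toric chart π_{σ₃}(u₁,u₂) = (u₁, u₁²u₂), namely the zero set of u₂²·conj(u₂) − 6·u₂·conj(u₂) + 11·u₂ − 6 in ℂ², equals ℂ × {1,2,3}, a disjoint union of three complex lines; in particular it is a real analytic manifold meeting the exceptional set {u₁ = 0} in the three points (0,1), (0,2), (0,3). -/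
open ComplexConjugate

/-!
Multiplying out, `w² w̄ − 6 w w̄ + 11 w − 6 = w (|w|² + 11) − 6 (|w|² + 1)`. At a zero, `w` times
the positive real `|w|² + 11` is real, so `w` itself is real. For real `w` the polynomial is
`w³ − 6 w² + 11 w − 6 = (w − 1) (w − 2) (w − 3)`. The two statements in `ℂ²` follow because the
equation does not involve the first coordinate.
-/

theorem mixed_cubic_eq_zero_iff (w : ℂ) :
    w ^ 2 * conj w - 6 * w * conj w + 11 * w - 6 = 0 ↔ w = 1 ∨ w = 2 ∨ w = 3 := by
  constructor
  · intro h
    obtain ⟨x, y⟩ := w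
    have hre := congrArg Complex.re h
    have him := congrArg Complex.im h
    simp [pow_two] at hre him
    have hy : y * (x ^ 2 + y ^ 2 + 11) = 0 := by linear_combination him
    obtain rfl : y = 0 := (mul_eq_zero.mp hy).resolve_right (by positivity)
    have hx : (x - 1) * ((x - 2) * (x - 3)) = 0 := by linear_combination hre
    simp only [mul_eq_zero, sub_eq_zero] at hx
    simpa [Complex.ext_iff] using hx
  · rintro (rfl | rfl | rfl) <;> simp only [map_one, map_ofNat] <;> norm_num

/-- The zero set of `w²w̄ − 6ww̄ + 11w − 6` is `{1, 2, 3}`; consequently the strict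
transform of `V = f⁻¹(0)` in the toric chart `π_{σ₃}(u₁,u₂) = (u₁, u₁²u₂)`, namely the
zero set of `u₂²ū₂ − 6u₂ū₂ + 11u₂ − 6` in `ℂ²`, equals `ℂ × {1,2,3}`, and it meets the
exceptional set `{u₁ = 0}` in the three points `(0,1)`, `(0,2)`, `(0,3)`. -/
theorem J10_f221214_strict_transform_sigma3 :
    ({w : ℂ | w ^ 2 * conj w - 6 * w * conj w + 11 * w - 6 = 0} = {1, 2, 3})
    ∧ ({p : ℂ × ℂ |
          p.2 ^ 2 * conj p.2 - 6 * p.2 * conj p.2 + 11 * p.2 - 6 = 0}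
        = (Set.univ : Set ℂ) ×ˢ ({1, 2, 3} : Set ℂ))
    ∧ ({p : ℂ × ℂ |
          p.2 ^ 2 * conj p.2 - 6 * p.2 * conj p.2 + 11 * p.2 - 6 = 0}
          ∩ {p : ℂ × ℂ | p.1 = 0}
        = {((0 : ℂ), (1 : ℂ)), ((0 : ℂ), (2 : ℂ)), ((0 : ℂ), (3 : ℂ))}) := by
  simp only [mixed_cubic_eq_zero_iff]
  refine ⟨rfl, ?_, ?_⟩
  · ext ⟨a, b⟩
    simp
  · ext ⟨a, b⟩
    simp only [Set.mem_inter_iff, Set.mem_ofPred_eq, Set.mem_insert_iff, Set.mem_singleton_iff,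
      Prod.mk.injEq]
    tauto
end
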